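/- Let μ be a probability measure on ℝ and let c > 0 be a real number with c ≠ 1. If the pushforward of μ under the map x ↦ c·x equals μ, then μ is the Dirac measure at 0. (Measure-theoretic core of the one-dimensional case of Proposition 1(i): the only distribution invariant under a non-identity positive scaling is the point mass at 0.) -/

import Mathlib

open MeasureTheory

/-!
The scaling `x ↦ c * x` preserves the finite measure `μ`, so by Poincaré recurrence almost every
point `x` returns infinitely often to each of its neighbourhoods. A point `x ≠ 0` is not recurrent:
for all `n ≥ 1`, `|c ^ n * x| ≤ c * |x| < |x|` if `c < 1`, and `|x| < c * |x| ≤ |c ^ n * x|` if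
`c > 1`. Hence `x = 0` almost everywhere, which forces `μ` to be the Dirac mass at `0`.
-/

/-- A probability measure on ℝ invariant under a positive non-identity scaling
x ↦ c·x must be the Dirac mass at 0. -/
theorem scaling_invariant_dirac (μ : Measure ℝ) [IsProbabilityMeasure μ]
    (c : ℝ) (hc : 0 < c) (hc1 : c ≠ 1)
    (h : Measure.map (fun x : ℝ => c * x) μ = μ) :
    μ = Measure.dirac 0 := by
  have hmp : MeasurePreserving (fun x : ℝ => c * x) μ μ := ⟨measurable_const_mul c, h⟩
  have hrec := hmp.conservative.ae_frequently_mem_of_mem_nhds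
  have hiter : ∀ (n : ℕ) (x : ℝ), (fun x : ℝ => c * x)^[n] x = c ^ n * x := by
    intro n x
    rw [mul_left_iterate]
  have hzero : ∀ᵐ x ∂μ, x = 0 := by
    filter_upwards [hrec] with x hx
    by_contra hx0
    have hpos : 0 < |x| := abs_pos.mpr hx0
    rcases lt_or_gt_of_ne hc1 with hlt | hgt
    · have hs : {y : ℝ | c * |x| < |y|} ∈ nhds x :=
        (isOpen_lt continuous_const continuous_abs).mem_nhds
          (show c * |x| < |x| by nlinarith)
      obtain ⟨n, hn, hmem⟩ := (hx _ hs).forall_exists_of_atTop 1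
      rw [hiter, Set.mem_ofPred_eq, abs_mul, abs_of_pos (pow_pos hc n)] at hmem
      have hle : c ^ n ≤ c := pow_le_of_le_one hc.le hlt.le (by omega)
      nlinarith
    · have hs : {y : ℝ | |y| < c * |x|} ∈ nhds x :=
        (isOpen_lt continuous_abs continuous_const).mem_nhds
          (show |x| < c * |x| by nlinarith)
      obtain ⟨n, hn, hmem⟩ := (hx _ hs).forall_exists_of_atTop 1
      rw [hiter, Set.mem_ofPred_eq, abs_mul, abs_of_pos (pow_pos hc n)] at hmem
      have hle : c ≤ c ^ n := le_self_pow₀ hgt.le (by omega)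
      nlinarith
  -- `id` and the constant `0` agree almost everywhere, so they push `μ` to the same measure.
  calc μ = μ.map id := Measure.map_id.symm
    _ = μ.map (fun _ => (0 : ℝ)) := Measure.map_congr hzero
    _ = Measure.dirac 0 := by simp [Measure.map_const]
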